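/- The toric ideal ker φ is not generated by n binomials: there is no set of n binomials of K[x₁,…,xₙ,y₁,…,yₙ] that generates ker φ as an ideal. In particular the simplicial toric variety V of codimension n attached to this parametrization is not a complete intersection. -/

import Mathlib

open MvPolynomial

/-- A binomial: the difference of two distinct monic monomials. -/
def IsBinomial {σ : Type*} {K : Type*} [CommRing K] (F : MvPolynomial σ K) : Prop :=
  ∃ a b : σ →₀ ℕ, a ≠ b ∧ F = monomial a (1 : K) - monomial b (1 : K)

theorem con_of_mem_span {σ ι K : Type*} [Field K] (c : AddCon (σ →₀ ℕ)) (A B : ι → σ →₀ ℕ)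
    (h : ∀ i, c (A i) (B i)) (a b : σ →₀ ℕ)
    (hab : (monomial a (1 : K) - monomial b (1 : K)) ∈
      Ideal.span (Set.range fun i => monomial (A i) (1 : K) - monomial (B i) (1 : K))) :
    c a b := by
  let ψ : MvPolynomial σ K →+* AddMonoidAlgebra K c.Quotient :=
    AddMonoidAlgebra.mapDomainRingHom K c.mk'
  have hψ : ∀ a, ψ (monomial a 1) = AddMonoidAlgebra.single (a : c.Quotient) 1 := by
    intro a
    exact AddMonoidAlgebra.mapDomain_single ..
  have hle : Ideal.span (Set.range fun i => monomial (A i) (1 : K) - monomial (B i) (1 : K))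
      ≤ RingHom.ker ψ := by
    rw [Ideal.span_le]
    rintro _ ⟨i, rfl⟩
    simp only [SetLike.mem_coe, RingHom.mem_ker, map_sub, hψ]
    rw [(AddCon.eq c).2 (h i), sub_self]
  have h2 := hle hab
  simp only [RingHom.mem_ker, map_sub, hψ, sub_eq_zero] at h2
  rw [← AddCon.eq c]
  exact AddMonoidAlgebra.of_injective (R := K) (M := c.Quotient)
    (a₁ := Multiplicative.ofAdd (a : c.Quotient)) (a₂ := Multiplicative.ofAdd (b : c.Quotient)) h2

/-- Rees congruence of the ideal of monomials not dividing `P`. -/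
def reesCon {σ : Type*} (P : σ →₀ ℕ) : AddCon (σ →₀ ℕ) where
  r a b := a = b ∨ (¬ a ≤ P ∧ ¬ b ≤ P)
  iseqv := ⟨fun _ => Or.inl rfl, by
    rintro a b (h | h)
    · exact Or.inl h.symm
    · exact Or.inr h.symm, by
    rintro a b c (rfl | h) (rfl | h')
    · exact Or.inl rfl
    · exact Or.inr h'
    · exact Or.inr h
    · exact Or.inr ⟨h.1, h'.2⟩⟩
  add' := by
    have key : ∀ x y : σ →₀ ℕ, ¬ x ≤ P → ¬ x + y ≤ P := fun x y h h' =>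
      h (le_trans (le_self_add) h')
    have key' : ∀ x y : σ →₀ ℕ, ¬ y ≤ P → ¬ x + y ≤ P := fun x y h h' =>
      h (le_trans (le_add_self) h')
    rintro a b c d (rfl | h) (rfl | h')
    · exact Or.inl rfl
    · exact Or.inr ⟨key' _ _ h'.1, key' _ _ h'.2⟩
    · exact Or.inr ⟨key _ _ h.1, key _ _ h.2⟩
    · exact Or.inr ⟨key _ _ h.1, key _ _ h.2⟩

/-- Congruence of one exponent modulo `t`. -/
def modCon {σ : Type*} (s : σ) (t : ℤ) : AddCon (σ →₀ ℕ) where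
  r a b := (a s : ℤ) ≡ b s [ZMOD t]
  iseqv := ⟨fun _ => Int.ModEq.refl _, fun h => h.symm, fun h h' => h.trans h'⟩
  add' := by
    intro a b c d h h'
    simpa using h.add h'

section core

variable {n : ℕ} (w : Fin n ⊕ Fin n → Fin n →₀ ℕ)

/-- The toric degree. -/
noncomputable def tdeg (a : Fin n ⊕ Fin n →₀ ℕ) : Fin n →₀ ℕ := ∑ s, a s • w s

theorem tdeg_single (s : Fin n ⊕ Fin n) (k : ℕ) : tdeg w (Finsupp.single s k) = k • w s := by
  unfold tdeg
  rw [Finset.sum_eq_single s]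
  · simp
  · intro b _ hb
    simp [Finsupp.single_apply, hb.symm]
  · simp

theorem le_tdeg (a : Fin n ⊕ Fin n →₀ ℕ) (s : Fin n ⊕ Fin n) (q : Fin n) :
    a s * w s q ≤ tdeg w a q := by
  unfold tdeg
  rw [Finsupp.finsetSum_apply]
  exact Finset.single_le_sum (f := fun s => (a s • w s) q) (fun _ _ => Nat.zero_le _)
    (Finset.mem_univ s)

theorem core {K : Type*} [Field K] (hn : 3 ≤ n) (f g d C : ℕ) (N : Fin n)
    (hg : 0 < g) (hd : 0 < d) (hfd : f = g + d) (hC : C < (n - 1) * (g * g))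
    (hC2 : (n - 1) * (g * d) + C = f * g)
    (wx : ∀ i q, w (Sum.inl i) q = if q = i then f * g else 0)
    (wy : ∀ l, l ≠ N → ∀ q, w (Sum.inr l) q = if q = l ∨ q = N then d else 0)
    (wN : ∀ q, w (Sum.inr N) q = if q = N then C else g * g)
    (A B : Fin n → Fin n ⊕ Fin n →₀ ℕ) (hne : ∀ i, A i ≠ B i)
    (hI : ∀ a b, (monomial a (1 : K) - monomial b (1 : K)) ∈
      Ideal.span (Set.range fun i => monomial (A i) (1 : K) - monomial (B i) (1 : K)) ↔
        tdeg w a = tdeg w b) : False := by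
  have hdeg : ∀ i, tdeg w (A i) = tdeg w (B i) := fun i =>
    (hI _ _).1 (Ideal.subset_span ⟨i, rfl⟩)
  have hex : ∀ l, ∃ p, p ≠ l ∧ p ≠ N := by
    intro l
    have : ∃ p, p ∉ ({l, N} : Finset (Fin n)) := by
      by_contra! h
      have h1 : (Finset.univ : Finset (Fin n)) ⊆ {l, N} := fun x _ => h x
      have h2 := (Finset.card_le_card h1).trans Finset.card_le_two
      simp at h2
      omega
    simpa using this
  have hfg : 0 < f * g := by subst hfd; positivity
  have hformula : ∀ a p, p ≠ N → tdeg w a p =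
      a (Sum.inl p) * (f * g) + (a (Sum.inr p) * d + a (Sum.inr N) * (g * g)) := by
    intro a p hp
    unfold tdeg
    rw [Finsupp.finsetSum_apply, Fintype.sum_sum_type]
    congr 1
    · simp [wx]
    · rw [← Finset.sum_erase_add _ _ (Finset.mem_univ N)]
      congr 1
      · rw [Finset.sum_eq_single p]
        · simp [wy p hp]
        · intro l hl hlp
          simp only [Finset.mem_erase] at hl
          simp [wy l hl.1, hp, hlp.symm]
        · simp [hp]
      · simp [wN, hp]
  have hformulaN : ∀ a, tdeg w a N =
      a (Sum.inl N) * (f * g) + (∑ l ∈ Finset.univ.erase N, a (Sum.inr l) * d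
        + a (Sum.inr N) * C) := by
    intro a
    unfold tdeg
    rw [Finsupp.finsetSum_apply, Fintype.sum_sum_type]
    congr 1
    · simp [wx]
    · rw [← Finset.sum_erase_add _ _ (Finset.mem_univ N)]
      congr 1
      · refine Finset.sum_congr rfl fun l hl => ?_
        simp only [Finset.mem_erase] at hl
        simp [wy l hl.1]
      · simp [wN]
  have hpos : ∀ s, ∃ q, 0 < w s q := by
    rintro (i | l)
    · exact ⟨i, by simp [wx, hfg]⟩
    · by_cases hl : l = N
      · subst hl
        obtain ⟨p, hp, -⟩ := hex l
        exact ⟨p, by simp [wN, hp, hg]⟩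
      · exact ⟨l, by simp [wy l hl, hd]⟩
  have hzero : ∀ a, tdeg w a = 0 → a = 0 := by
    intro a ha
    ext s
    obtain ⟨q, hq⟩ := hpos s
    have h := le_tdeg w a s q
    rw [ha] at h
    simp at h
    rcases h with h | h
    · simpa using h
    · omega
  have hpure : ∀ l l' k k', 0 < k → 0 < k' → k • w (Sum.inr l) = k' • w (Sum.inr l') → l = l' := by
    intro l l' k k' hk hk' h
    by_contra hll
    have hq : ∀ q, k * w (Sum.inr l) q = k' * w (Sum.inr l') q := fun q => by
      simpa using DFunLike.congr_fun h q
    by_cases hl : l = N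
    · obtain ⟨p, hp, hpN⟩ := hex l'
      have := hq p
      subst hl
      rw [wN, wy l' (Ne.symm hll)] at this
      simp [hp, hpN] at this
      omega
    · by_cases hl' : l' = N
      · obtain ⟨p, hp, hpN⟩ := hex l
        have := hq p
        subst hl'
        rw [wN, wy l hl] at this
        simp [hp, hpN] at this
        omega
      · have := hq l
        rw [wy l hl, wy l' hl'] at this
        simp [hl, hll] at this
        omega
  -- every variable `y_l` has a generator with a pure power of `y_l`
  have hgen : ∀ l, ∃ j, ∃ k, 0 < k ∧
      (A j = Finsupp.single (Sum.inr l) k ∨ B j = Finsupp.single (Sum.inr l) k) := by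
    intro l
    let P : Fin n ⊕ Fin n →₀ ℕ := Finsupp.single (Sum.inr l) (f * g)
    let Q : Fin n ⊕ Fin n →₀ ℕ :=
      Finsupp.equivFunOnFinite.symm (Sum.elim (fun p => w (Sum.inr l) p) (fun _ => 0))
    have hPQ : tdeg w P = tdeg w Q := by
      rw [tdeg_single]
      ext q
      unfold tdeg
      rw [Finsupp.finsetSum_apply, Fintype.sum_sum_type]
      simp [Q, wx, mul_comm]
    have hmem := (hI P Q).2 hPQ
    have hneq : P ≠ Q := by
      intro h
      have := DFunLike.congr_fun h (Sum.inr l)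
      simp [P, Q] at this
      omega
    have hj : ∃ j, ¬ (reesCon P) (A j) (B j) := by
      by_contra! hcon
      rcases con_of_mem_span (reesCon P) A B hcon P Q hmem with h | h
      · exact hneq h
      · exact h.1 le_rfl
    obtain ⟨j, hj⟩ := hj
    have hj' : ¬ (A j = B j ∨ (¬ A j ≤ P ∧ ¬ B j ≤ P)) := hj
    have hle : ∀ a, a ≤ P → ∃ k, a = Finsupp.single (Sum.inr l) k := by
      intro a ha
      refine ⟨a (Sum.inr l), ?_⟩
      ext s
      by_cases hs : Sum.inr l = s
      · subst hs; simp
      · have := ha s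
        simp only [P, Finsupp.single_apply, if_neg hs] at this ⊢
        omega
    have hor : A j ≤ P ∨ B j ≤ P := by tauto
    refine ⟨j, ?_⟩
    rcases hor with h | h
    · obtain ⟨k, hk⟩ := hle _ h
      refine ⟨k, ?_, Or.inl hk⟩
      rcases Nat.eq_zero_or_pos k with rfl | h0
      · exfalso
        have h1 := hdeg j
        rw [hk, tdeg_single, zero_smul] at h1
        apply hne j
        rw [hk, hzero _ h1.symm]; simp
      · exact h0
    · obtain ⟨k, hk⟩ := hle _ h
      refine ⟨k, ?_, Or.inr hk⟩
      rcases Nat.eq_zero_or_pos k with rfl | h0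
      · exfalso
        have h1 := hdeg j
        rw [hk, tdeg_single, zero_smul] at h1
        apply hne j
        rw [hk, hzero _ h1]; simp
      · exact h0
  choose j k hk hjk using hgen
  have hjdeg : ∀ l, tdeg w (A (j l)) = k l • w (Sum.inr l) := by
    intro l
    rcases hjk l with h | h
    · rw [h, tdeg_single]
    · rw [hdeg, h, tdeg_single]
  have hinj : Function.Injective j := by
    intro l l' h
    refine hpure l l' _ _ (hk l) (hk l') ?_
    rw [← hjdeg, ← hjdeg, h]
  have hsurj := Finite.surjective_of_injective hinj
  -- the generators other than `j N` do not involve `y_N`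
  have hother : ∀ l, l ≠ N → ∀ a, tdeg w a = k l • w (Sum.inr l) → a (Sum.inr N) = 0 := by
    intro l hl a ha
    obtain ⟨p, hp, hpN⟩ := hex l
    have h := le_tdeg w a (Sum.inr N) p
    rw [ha, wN] at h
    simp [wy l hl, hp, hpN] at h
    omega
  -- the last generator
  obtain ⟨b, hbdeg, hbmod⟩ : ∃ b, tdeg w b = k N • w (Sum.inr N) ∧
      ∀ i, (modCon (Sum.inr N) ((k N : ℤ) - b (Sum.inr N))) (A i) (B i) := by
    have hrest : ∀ t : ℤ, ∀ l, l ≠ N → (modCon (Sum.inr N) t) (A (j l)) (B (j l)) := by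
      intro t l hl
      change (_ : ℤ) ≡ _ [ZMOD t]
      rw [hother l hl _ (hjdeg l), hother l hl (B (j l)) (by rw [← hdeg, hjdeg])]
    rcases hjk N with h | h
    · refine ⟨B (j N), by rw [← hdeg, hjdeg], fun i => ?_⟩
      obtain ⟨l, rfl⟩ := hsurj i
      by_cases hl : l = N
      · subst hl
        change (_ : ℤ) ≡ _ [ZMOD _]
        rw [h, Int.modEq_comm, Int.modEq_iff_dvd]
        simp
      · exact hrest _ l hl
    · refine ⟨A (j N), hjdeg N, fun i => ?_⟩
      obtain ⟨l, rfl⟩ := hsurj i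
      by_cases hl : l = N
      · subst hl
        change (_ : ℤ) ≡ _ [ZMOD _]
        rw [h, Int.modEq_iff_dvd]
        simp
      · exact hrest _ l hl
  -- the mixed relation
  let P : Fin n ⊕ Fin n →₀ ℕ :=
    Finsupp.equivFunOnFinite.symm (Sum.elim (fun _ => 0) (fun l => if l = N then 1 else g))
  let Q : Fin n ⊕ Fin n →₀ ℕ :=
    Finsupp.equivFunOnFinite.symm (Sum.elim (fun _ => 1) (fun _ => 0))
  have hcard : (Finset.univ.erase N).card = n - 1 := by simp
  have hPQ : tdeg w P = tdeg w Q := by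
    ext q
    by_cases hq : q = N
    · subst hq
      rw [hformulaN, hformulaN]
      have : ∑ l ∈ Finset.univ.erase q, P (Sum.inr l) * d = (n - 1) * (g * d) := by
        rw [← hcard, ← smul_eq_mul, ← Finset.sum_const]
        refine Finset.sum_congr rfl fun l hl => ?_
        simp only [Finset.mem_erase] at hl
        simp [P, hl.1]
      rw [this]
      simp [P, Q, hC2]
    · rw [hformula _ _ hq, hformula _ _ hq]
      simp [P, Q, hq, hfd]
      ring
  have hone := con_of_mem_span _ A B hbmod P Q ((hI P Q).2 hPQ)
  have hone' : (P (Sum.inr N) : ℤ) ≡ Q (Sum.inr N) [ZMOD ((k N : ℤ) - b (Sum.inr N))] := hone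
  have hP1 : P (Sum.inr N) = 1 := by simp [P]
  have hQ0 : Q (Sum.inr N) = 0 := by simp [Q]
  rw [hP1, hQ0, Int.modEq_comm, Int.modEq_iff_dvd] at hone'
  have hunit : ((k N : ℤ) - b (Sum.inr N)) = 1 ∨ ((k N : ℤ) - b (Sum.inr N)) = -1 := by
    apply Int.isUnit_iff.1
    apply isUnit_of_dvd_one
    simpa using hone'
  have hfor : ∀ p, p ≠ N → k N * (g * g) =
      b (Sum.inl p) * (f * g) + (b (Sum.inr p) * d + b (Sum.inr N) * (g * g)) := by
    intro p hp
    rw [← hformula b p hp, hbdeg]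
    simp [wN, hp]
  have hforN : k N * C = b (Sum.inl N) * (f * g) +
      (∑ l ∈ Finset.univ.erase N, b (Sum.inr l) * d + b (Sum.inr N) * C) := by
    rw [← hformulaN b, hbdeg]
    simp [wN]
  have hgg : 0 < g * g := by positivity
  obtain ⟨p0, hp0, -⟩ := hex N
  rcases hunit with h | h
  · have hkN : k N = b (Sum.inr N) + 1 := by omega
    rw [hkN] at hfor hforN
    have hbp : ∀ p, p ≠ N → b (Sum.inr p) * d = g * g := by
      intro p hp
      have h1 := hfor p hp
      have h2 : b (Sum.inl p) = 0 := by
        by_contra h0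
        have h3 : f * g ≤ b (Sum.inl p) * (f * g) := Nat.le_mul_of_pos_left _ (by omega)
        have h4 : g * g < f * g := Nat.mul_lt_mul_of_pos_right (by omega) hg
        rw [add_mul] at h1
        omega
      rw [h2, add_mul] at h1
      omega
    have hsum : ∑ l ∈ Finset.univ.erase N, b (Sum.inr l) * d = (n - 1) * (g * g) := by
      rw [← hcard, ← smul_eq_mul, ← Finset.sum_const]
      refine Finset.sum_congr rfl fun l hl => ?_
      simp only [Finset.mem_erase] at hl
      exact hbp l hl.1
    rw [hsum, add_mul] at hforN
    omega
  · have hkN : b (Sum.inr N) = k N + 1 := by omega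
    have h1 := hfor p0 hp0
    rw [hkN, add_mul] at h1
    omega

end core

theorem stmt9 (n : ℕ) (hn : 3 ≤ n) (f g : ℕ) (hco : Nat.Coprime f g)
    (hg : 0 < g) (hgf : g < f) (hng : (n - 1) * f ≤ n * g)
    (K : Type*) [Field K] [CharZero K]
    (φ : MvPolynomial (Fin n ⊕ Fin n) K →ₐ[K] MvPolynomial (Fin n) K)
    (hφx : ∀ i : Fin n, φ (X (Sum.inl i)) = X i ^ (f * g))
    (hφy : ∀ i : Fin (n - 1), φ (X (Sum.inr (Fin.castLE (by omega) i))) =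
      X (Fin.castLE (by omega) i : Fin n) ^ (f - g) * X (⟨n - 1, by omega⟩ : Fin n) ^ (f - g))
    (hφyn : φ (X (Sum.inr (⟨n - 1, by omega⟩ : Fin n))) =
      (∏ i : Fin (n - 1), X (Fin.castLE (by omega) i : Fin n) ^ g ^ 2) *
        X (⟨n - 1, by omega⟩ : Fin n) ^ (g * ((n - 1) * g - (n - 2) * f))) :
    ¬ ∃ B : Fin n → MvPolynomial (Fin n ⊕ Fin n) K,
      (∀ i, IsBinomial (B i)) ∧ Ideal.span (Set.range B) = RingHom.ker φ := by
  rintro ⟨F, hF, hspan⟩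
  choose A B hne hFAB using hF
  have hFeq : F = fun i => monomial (A i) (1 : K) - monomial (B i) (1 : K) := funext hFAB
  obtain ⟨m, rfl⟩ : ∃ m, n = m + 3 := ⟨n - 3, by omega⟩
  obtain ⟨d, rfl⟩ : ∃ d, f = g + d := ⟨f - g, by omega⟩
  have e1 : m + 3 - 1 = m + 2 := rfl
  have e2 : m + 3 - 2 = m + 1 := rfl
  have hle : (m + 1) * (g + d) ≤ (m + 2) * g := by
    rw [e1] at hng
    nlinarith
  obtain ⟨c, hc⟩ : ∃ c, (m + 2) * g = (m + 1) * (g + d) + c := ⟨_, (Nat.add_sub_cancel' hle).symm⟩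
  have hcc : (m + 3 - 1) * g - (m + 3 - 2) * (g + d) = c := by
    rw [e1, e2, hc]; simp
  set N : Fin (m + 3) := ⟨m + 3 - 1, by omega⟩ with hN
  let w : Fin (m + 3) ⊕ Fin (m + 3) → Fin (m + 3) →₀ ℕ := Sum.elim
    (fun i => Finsupp.single i ((g + d) * g))
    (fun l => if l = N then Finsupp.equivFunOnFinite.symm (fun q => if q = N then g * c else g * g)
      else Finsupp.single l d + Finsupp.single N d)
  have hcast : ∀ l : Fin (m + 3), l ≠ N → ∃ i : Fin (m + 3 - 1), Fin.castLE (by omega) i = l := by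
    intro l hl
    refine ⟨⟨l, ?_⟩, rfl⟩
    have : (l : ℕ) ≠ m + 2 := fun h => hl (Fin.ext h)
    omega
  have hw : ∀ s, φ (X s) = monomial (w s) 1 := by
    rintro (i | l)
    · rw [hφx, X_pow_eq_monomial]; rfl
    · by_cases hl : l = N
      · rw [hl, hφyn, hcc]
        have : w (Sum.inr N) = ∑ i : Fin (m + 2), Finsupp.single (Fin.castSucc i) (g ^ 2) +
            Finsupp.single N (g * c) := by
          ext q
          simp only [w, Sum.elim_inr, if_true, Finsupp.add_apply, Finsupp.finsetSum_apply]
          have hNl : N = Fin.last (m + 2) := rfl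
          refine Fin.lastCases ?_ (fun q => ?_) q
          · simp [hNl, Finsupp.single_apply, Fin.castSucc_ne_last]
          · simp [hNl, Finsupp.single_apply, Fin.castSucc_ne_last, (Fin.castSucc_ne_last _).symm,
              sq]
        rw [this]
        simp only [X_pow_eq_monomial]
        rw [← one_mul (1 : K), ← monomial_mul, one_mul, monomial_sum_one]
        rfl
      · obtain ⟨i, rfl⟩ := hcast l hl
        rw [hφy, X_pow_eq_monomial, X_pow_eq_monomial, monomial_mul]
        simp [w, hl]
  have hφm : ∀ a, φ (monomial a 1) = monomial (tdeg w a) 1 := by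
    intro a
    rw [monomial_eq, map_mul, Finsupp.prod_fintype _ _ (by simp), map_prod]
    unfold tdeg
    rw [monomial_sum_one]
    simp [hw, monomial_pow]
  refine core w (K := K) hn (g + d) g d (g * c) N hg (by omega) rfl ?_ ?_ ?_ ?_ ?_ A B hne ?_
  · rw [e1]
    have : g * ((m + 1) * (g + d) + c) = g * ((m + 2) * g) := by rw [hc]
    have h2 : 0 < g * ((m + 1) * (g + d)) := by positivity
    nlinarith
  · rw [e1]
    have : g * ((m + 1) * (g + d) + c) = g * ((m + 2) * g) := by rw [hc]
    nlinarith
  · intro i q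
    simp only [w, Sum.elim_inl, Finsupp.single_apply]
    by_cases h1 : q = i
    · simp [h1]
    · simp [h1, Ne.symm h1]
  · intro l hl q
    simp only [w, Sum.elim_inr, if_neg hl, Finsupp.add_apply, Finsupp.single_apply]
    by_cases h1 : q = l
    · subst h1; simp [Ne.symm hl]
    · by_cases h2 : q = N
      · subst h2; simp [hl]
      · simp [h1, h2, Ne.symm h1, Ne.symm h2]
  · intro q
    simp [w]
  · intro a b
    rw [← hFeq, hspan, RingHom.mem_ker, map_sub, hφm, hφm, sub_eq_zero]
    constructor
    · intro h
      exact (monomial_left_injective (one_ne_zero (α := K))) h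
    · intro h; rw [h]
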